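/- Guaranteed upper bound with constant one (smooth setting, inequality (2.7) of the paper): Let d ≥ 1, let f : ℝ^d → ℝ, let u : ℝ^d → ℝ be a C² compactly supported function with Δu(x) = −f(x) for all x ∈ ℝ^d, let v : ℝ^d → ℝ be any C¹ compactly supported function (playing the role of the Galerkin approximation u_h), and let q : ℝ^d → ℝ^d be any C¹ compactly supported vector field with div q(x) = −f(x) for all x ∈ ℝ^d. Then ∫_{ℝ^d} ‖∇u(x) − ∇v(x)‖² dx ≤ ∫_{ℝ^d} ‖q(x) − ∇v(x)‖² dx; i.e. ‖q − ∇v‖_{L²} is a reliable bound for the energy error ‖∇u − ∇v‖_{L²} with constant one. -/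

import Mathlib

open MeasureTheory RealInnerProductSpace

/-- Divergence of a vector field on `ℝ^d`: `div σ (x) = ∑ i (∂σᵢ/∂xᵢ)(x)`. -/
noncomputable def vdiv {d : ℕ} (σ : EuclideanSpace ℝ (Fin d) → EuclideanSpace ℝ (Fin d))
    (x : EuclideanSpace ℝ (Fin d)) : ℝ :=
  ∑ i : Fin d, fderiv ℝ σ x (EuclideanSpace.single i (1 : ℝ)) i

/-!
Put `σ = q - ∇u`, which is divergence-free, and `w = u - v`. The compactly supported
vector field `w σ` has divergence `⟪∇w, σ⟫`, so by the divergence theorem `σ` is orthogonal to `∇w`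
in `L²`. The bound is then Pythagoras' theorem for `q - ∇v = ∇w + σ`.
-/

section Divergence

variable {E G : Type*} [NormedAddCommGroup E] [NormedSpace ℝ E] [FiniteDimensional ℝ E]
  [NormedAddCommGroup G] [NormedSpace ℝ G]

/-- The trace as a continuous linear functional on the endomorphisms of a finite-dimensional space,
which allows it to be exchanged with integrals. -/
noncomputable def traceCLM (E : Type*) [NormedAddCommGroup E] [NormedSpace ℝ E]
    [FiniteDimensional ℝ E] : (E →L[ℝ] E) →L[ℝ] ℝ :=
  (LinearMap.trace ℝ E ∘ₗ ContinuousLinearMap.coeLM ℝ).toContinuousLinearMap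

lemma traceCLM_apply (L : E →L[ℝ] E) : traceCLM E L = LinearMap.trace ℝ E L := rfl

/-- The divergence of a vector field on a finite-dimensional space, encoded without coordinates as
the trace of its derivative; it is `0` wherever the field is not differentiable. -/
noncomputable def divergence (σ : E → E) (x : E) : ℝ :=
  traceCLM E (fderiv ℝ σ x)

lemma vdiv_eq_divergence {d : ℕ} (σ : EuclideanSpace ℝ (Fin d) → EuclideanSpace ℝ (Fin d)) :
    vdiv σ = divergence σ := by
  ext x
  simp [vdiv, divergence, traceCLM_apply,
    LinearMap.trace_eq_sum_inner _ (EuclideanSpace.basisFun (Fin d) ℝ),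
    EuclideanSpace.inner_single_left]

lemma divergence_sub {σ τ : E → E} {x : E} (hσ : DifferentiableAt ℝ σ x)
    (hτ : DifferentiableAt ℝ τ x) :
    divergence (σ - τ) x = divergence σ x - divergence τ x := by
  simp only [divergence, fderiv_sub hσ hτ, map_sub]

lemma divergence_smul {w : E → ℝ} {σ : E → E} {x : E} (hw : DifferentiableAt ℝ w x)
    (hσ : DifferentiableAt ℝ σ x) :
    divergence (w • σ) x = w x * divergence σ x + fderiv ℝ w x (σ x) := by
  have htrace : traceCLM E ((fderiv ℝ w x).smulRight (σ x)) = fderiv ℝ w x (σ x) :=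
    LinearMap.trace_smulRight (fderiv ℝ w x : E →ₗ[ℝ] ℝ) (σ x)
  simp only [divergence, fderiv_smul hw hσ, map_add, map_smul, htrace, smul_eq_mul]

variable [MeasurableSpace E] {μ : Measure E}

lemma integrable_divergence {σ : E → E} (hσ'int : Integrable (fderiv ℝ σ) μ) :
    Integrable (divergence σ) μ :=
  (traceCLM E).integrable_comp hσ'int

variable [BorelSpace E] [μ.IsAddHaarMeasure]

lemma integral_fderiv_apply_eq_zero {F : E → G} (hF : Differentiable ℝ F) (hFint : Integrable F μ)
    {v : E} (hF'int : Integrable (fun x => fderiv ℝ F x v) μ) :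
    ∫ x, fderiv ℝ F x v ∂μ = 0 := by
  simpa using integral_smul_fderiv_eq_neg_fderiv_smul_of_integrable (f := fun _ => (1 : ℝ))
    (v := v) (by simp) (by simpa using hF'int) (by simpa using hFint)
    (fun _ _ => differentiableAt_const 1) (fun x _ => hF x)

lemma integral_fderiv_eq_zero {F : E → G} (hF : Differentiable ℝ F) (hFint : Integrable F μ)
    (hF'int : Integrable (fderiv ℝ F) μ) :
    ∫ x, fderiv ℝ F x ∂μ = 0 := by
  ext v
  rw [ContinuousLinearMap.integral_apply hF'int,
    integral_fderiv_apply_eq_zero hF hFint (hF'int.apply_continuousLinearMap v)]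
  rfl

theorem integral_divergence_eq_zero {σ : E → E} (hσ : Differentiable ℝ σ) (hσint : Integrable σ μ)
    (hσ'int : Integrable (fderiv ℝ σ) μ) :
    ∫ x, divergence σ x ∂μ = 0 := by
  simp only [divergence]
  rw [(traceCLM E).integral_comp_comm hσ'int, integral_fderiv_eq_zero hσ hσint hσ'int, map_zero]

end Divergence

lemma integral_norm_sq_le_integral_norm_add_sq {α E : Type*} [MeasurableSpace α] {μ : Measure α}
    [NormedAddCommGroup E] [InnerProductSpace ℝ E] {a b : α → E}
    (hadd : MemLp (a + b) 2 μ) (hinner : Integrable (fun x => ⟪a x, b x⟫) μ)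
    (hnonneg : 0 ≤ ∫ x, ⟪a x, b x⟫ ∂μ) :
    ∫ x, ‖a x‖ ^ 2 ∂μ ≤ ∫ x, ‖a x + b x‖ ^ 2 ∂μ := by
  have hsq : Integrable (fun x => ‖a x + b x‖ ^ 2) μ := hadd.integrable_norm_pow two_ne_zero
  calc ∫ x, ‖a x‖ ^ 2 ∂μ
      ≤ ∫ x, (‖a x + b x‖ ^ 2 - 2 * ⟪a x, b x⟫) ∂μ := by
        refine integral_mono_of_nonneg (.of_forall fun x => by positivity)
          (hsq.sub (hinner.const_mul 2)) (.of_forall fun x => ?_)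
        linarith [norm_add_sq_real (a x) (b x), sq_nonneg ‖b x‖]
    _ = ∫ x, ‖a x + b x‖ ^ 2 ∂μ - 2 * ∫ x, ⟪a x, b x⟫ ∂μ := by
        rw [integral_sub hsq (hinner.const_mul 2), integral_const_mul]
    _ ≤ ∫ x, ‖a x + b x‖ ^ 2 ∂μ := by linarith

section Gradient

variable {𝕜 E : Type*} [RCLike 𝕜] [NormedAddCommGroup E] [InnerProductSpace 𝕜 E]
  [CompleteSpace E] {u v : E → 𝕜}

lemma gradient_sub {x : E} (hu : DifferentiableAt 𝕜 u x) (hv : DifferentiableAt 𝕜 v x) :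
    gradient (u - v) x = gradient u x - gradient v x := by
  simp only [gradient, fderiv_sub hu hv, map_sub]

lemma hasCompactSupport_gradient (hu : HasCompactSupport u) : HasCompactSupport (gradient u) :=
  (hu.fderiv 𝕜).comp_left (map_zero (InnerProductSpace.toDual 𝕜 E).symm)

end Gradient

lemma contDiff_gradient {E : Type*} [NormedAddCommGroup E] [InnerProductSpace ℝ E]
    [CompleteSpace E] {u : E → ℝ} {m n : WithTop ℕ∞} (hu : ContDiff ℝ n u) (hmn : m + 1 ≤ n) :
    ContDiff ℝ m (gradient u) :=
  (InnerProductSpace.toDual ℝ E).symm.contDiff.comp (hu.fderiv_right hmn)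

section UpperBound

variable {E : Type*} [NormedAddCommGroup E] [InnerProductSpace ℝ E] [FiniteDimensional ℝ E]

lemma divergence_smul_of_divergence_eq_zero {w : E → ℝ} {σ : E → E} {x : E}
    (hw : DifferentiableAt ℝ w x) (hσ : DifferentiableAt ℝ σ x) (hdiv : divergence σ x = 0) :
    divergence (w • σ) x = ⟪gradient w x, σ x⟫ := by
  rw [divergence_smul hw hσ, hdiv, mul_zero, zero_add, inner_gradient_left]

variable [MeasurableSpace E] [BorelSpace E] {μ : Measure E} [μ.IsAddHaarMeasure]

theorem integral_norm_gradient_sq_le_of_divergence_eq_zero {w : E → ℝ} {σ : E → E}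
    (hw : Differentiable ℝ w) (hσ : Differentiable ℝ σ) (hdiv : ∀ x, divergence σ x = 0)
    (hprod : Integrable (w • σ) μ) (hprod' : Integrable (fderiv ℝ (w • σ)) μ)
    (hL2 : MemLp (gradient w + σ) 2 μ) :
    ∫ x, ‖gradient w x‖ ^ 2 ∂μ ≤ ∫ x, ‖gradient w x + σ x‖ ^ 2 ∂μ := by
  have hdiv_smul : divergence (w • σ) = fun x => ⟪gradient w x, σ x⟫ :=
    funext fun x => divergence_smul_of_divergence_eq_zero (hw x) (hσ x) (hdiv x)
  have horth : ∫ x, ⟪gradient w x, σ x⟫ ∂μ = 0 :=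
    hdiv_smul ▸ integral_divergence_eq_zero (hw.smul hσ) hprod hprod'
  exact integral_norm_sq_le_integral_norm_add_sq hL2 (hdiv_smul ▸ integrable_divergence hprod')
    horth.ge

theorem guaranteed_upper_bound_general {u v : E → ℝ} {q : E → E}
    (hu : Differentiable ℝ u) (hgradu : Differentiable ℝ (gradient u)) (hv : Differentiable ℝ v)
    (hq : Differentiable ℝ q) (hdiv : ∀ x, divergence q x = divergence (gradient u) x)
    (hprod : Integrable ((u - v) • (q - gradient u)) μ)
    (hprod' : Integrable (fderiv ℝ ((u - v) • (q - gradient u))) μ)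
    (hL2 : MemLp (q - gradient v) 2 μ) :
    ∫ x, ‖gradient u x - gradient v x‖ ^ 2 ∂μ ≤ ∫ x, ‖q x - gradient v x‖ ^ 2 ∂μ := by
  have hgrad : gradient (u - v) = gradient u - gradient v :=
    funext fun x => gradient_sub (hu x) (hv x)
  have hdiv_sub : ∀ x, divergence (q - gradient u) x = 0 := fun x => by
    rw [divergence_sub (hq x) (hgradu x), hdiv, sub_self]
  have hsum : gradient (u - v) + (q - gradient u) = q - gradient v := by rw [hgrad]; abel
  simpa [hgrad] using integral_norm_gradient_sq_le_of_divergence_eq_zero (hu.sub hv)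
    (hq.sub hgradu) hdiv_sub hprod hprod' (hsum ▸ hL2)

end UpperBound

/-- Guaranteed upper bound with constant one:
`∫ ‖∇u - ∇v‖² ≤ ∫ ‖q - ∇v‖²` whenever `div q = -f = Δu`. -/
theorem guaranteed_upper_bound {d : ℕ} (hd : 1 ≤ d)
    (f u : EuclideanSpace ℝ (Fin d) → ℝ)
    (hu : ContDiff ℝ 2 u) (husupp : HasCompactSupport u)
    (hlap : ∀ x, vdiv (gradient u) x = - f x)
    (v : EuclideanSpace ℝ (Fin d) → ℝ)
    (hv : ContDiff ℝ 1 v) (hvsupp : HasCompactSupport v)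
    (q : EuclideanSpace ℝ (Fin d) → EuclideanSpace ℝ (Fin d))
    (hq : ContDiff ℝ 1 q) (hqsupp : HasCompactSupport q)
    (hdiv : ∀ x, vdiv q x = - f x) :
    (∫ x, ‖gradient u x - gradient v x‖ ^ 2) ≤ ∫ x, ‖q x - gradient v x‖ ^ 2 := by
  have hgradu : ContDiff ℝ 1 (gradient u) := contDiff_gradient hu one_add_one_eq_two.le
  have hgradv : Continuous (gradient v) := (contDiff_gradient hv (zero_add 1).le).continuous
  have hu1 : ContDiff ℝ 1 u := hu.of_le one_le_two
  have hF : ContDiff ℝ 1 ((u - v) • (q - gradient u)) := (hu1.sub hv).smul (hq.sub hgradu)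
  have hFsupp : HasCompactSupport ((u - v) • (q - gradient u)) := (husupp.sub hvsupp).smul_right
  refine guaranteed_upper_bound_general (hu1.differentiable one_ne_zero)
    (hgradu.differentiable one_ne_zero) (hv.differentiable one_ne_zero)
    (hq.differentiable one_ne_zero) (fun x => ?_)
    (hF.continuous.integrable_of_hasCompactSupport hFsupp)
    ((hF.continuous_fderiv one_ne_zero).integrable_of_hasCompactSupport (hFsupp.fderiv ℝ))
    ((hq.continuous.sub hgradv).memLp_of_hasCompactSupport
      (hqsupp.sub (hasCompactSupport_gradient hvsupp)))
  rw [← vdiv_eq_divergence, ← vdiv_eq_divergence, hdiv, hlap]
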